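/- Let P = x^32 - 4x^31 - 155x^28 + 713x^27 - 2480x^26 + 9300x^25 - 5921x^24 + 24707x^23 + 127410x^22 - 646195x^21 + 747906x^20 - 7527575x^19 + 4369791x^18 - 28954961x^17 - 40645681x^16 + 66421685x^15 - 448568729x^14 + 751001257x^13 - 1820871490x^12 + 2531110165x^11 - 4120267319x^10 + 4554764528x^9 - 5462615927x^8 + 4607500922x^7 - 4062352344x^6 + 2380573824x^5 - 1492309000x^4 + 521018178x^3 - 201167463x^2 + 20505628x - 1261963 ∈ ℚ[x], which is irreducible, and let K = ℚ[x]/(P) be the number field it defines. The discriminant of K over ℚ equals -31^41. -/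

import Mathlib

open Polynomial

noncomputable def P : Polynomial ℚ :=
  X^32 - 4*X^31 - 155*X^28 + 713*X^27 - 2480*X^26 + 9300*X^25 - 5921*X^24 + 24707*X^23 + 127410*X^22 - 646195*X^21 + 747906*X^20 - 7527575*X^19 + 4369791*X^18 - 28954961*X^17 - 40645681*X^16 + 66421685*X^15 - 448568729*X^14 + 751001257*X^13 - 1820871490*X^12 + 2531110165*X^11 - 4120267319*X^10 + 4554764528*X^9 - 5462615927*X^8 + 4607500922*X^7 - 4062352344*X^6 + 2380573824*X^5 - 1492309000*X^4 + 521018178*X^3 - 201167463*X^2 + 20505628*X - 1261963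

/-
Let `α` be a root of `P`. The discriminant of `P` is `-31 ^ 41 * (31 * f) ^ 2` with `f` prime to
`31`, and there is an integer `c` such that `P ≡ (X - c) ^ 32` modulo `31` and `c` is a double root
of `P` modulo `31 * f`: both `(31 * f) ^ 2 ∣ P(c)` and `P'(c) = 31 * f * t`. Put `π = α - c` and
expand `P = P(c) + P'(c) (X - c) + h(X) (X - c) ^ 2`. Then `d = π * h(α) / (31 * f)` is a root of a
monic quadratic polynomial over `ℤ[α]`, hence an algebraic integer. As `P(c) = N(π)` has `31`-adic
valuation `40 > 32`, there are two primes `𝔭`, `𝔮` above `31`, with `31 = 𝔭 ^ 31 * 𝔮`, and they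
witness that `1, π, …, π ^ 30, d + t` is linearly independent modulo `31`. The discriminant of this
family is `disc P / (31 * f) ^ 2 = -31 ^ 41`, so no other prime can divide its index in the ring of
integers, and it is an integral basis.
-/

section PowerBasis

variable {K L : Type*} [Field K] [Field L] [Algebra K L] [Algebra.IsSeparable K L]

theorem norm_aeval_gen_eq_resultant_minpoly (pb : PowerBasis K L) (g : K[X]) :
    Algebra.norm K (aeval pb.gen g) = (minpoly K pb.gen).resultant g := by
  classical
  have : FiniteDimensional K L := pb.finite
  let E := AlgebraicClosure K
  let φ := algebraMap K E
  have hmonic : (minpoly K pb.gen).Monic := minpoly.monic pb.isIntegral_gen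
  have hnodup : ((minpoly K pb.gen).map φ).roots.Nodup :=
    nodup_roots (Separable.map (Algebra.IsSeparable.isSeparable K pb.gen))
  have hres := resultant_eq_prod_eval ((minpoly K pb.gen).map φ) (g.map φ) g.natDegree
    natDegree_map_le (IsAlgClosed.splits _)
  rw [natDegree_map, resultant_map_map, (hmonic.map φ).leadingCoeff, one_pow, one_mul] at hres
  apply FaithfulSMul.algebraMap_injective K E
  rw [hres, Algebra.norm_eq_prod_embeddings K E,
    Fintype.prod_equiv pb.liftEquiv' _ (fun x => (g.map φ).eval x.1) fun σ => ?_,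
    Finset.prod_mem_multiset _ _ (g.map φ).eval fun _ => rfl, Finset.prod_eq_multiset_prod,
    Multiset.toFinset_val, Multiset.dedup_eq_self.2 hnodup]
  rw [pb.liftEquiv'_apply_coe, eval_map_algebraMap, aeval_algHom_apply]

theorem norm_gen_sub_algebraMap (pb : PowerBasis K L) (c : K) :
    Algebra.norm K (pb.gen - algebraMap K L c) = (-1) ^ pb.dim * (minpoly K pb.gen).eval c := by
  have h := norm_aeval_gen_eq_resultant_minpoly pb (X - C c)
  rwa [natDegree_X_sub_C, resultant_X_sub_C_right _ _ _ le_rfl, pb.natDegree_minpoly, map_sub,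
    aeval_X, aeval_C] at h

theorem discr_gen_powers_eq_discr_minpoly [CharZero K] (pb : PowerBasis K L) {n : ℕ}
    (hn : pb.dim = n) :
    Algebra.discr K (fun i : Fin n => pb.gen ^ (i : ℕ)) = (minpoly K pb.gen).discr := by
  subst hn
  have : FiniteDimensional K L := pb.finite
  have hmonic : (minpoly K pb.gen).Monic := minpoly.monic pb.isIntegral_gen
  have hderiv := resultant_deriv (minpoly.degree_pos pb.isIntegral_gen)
  rw [← natDegree_derivative] at hderiv
  rw [← pb.coe_basis, Algebra.discr_powerBasis_eq_norm, norm_aeval_gen_eq_resultant_minpoly,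
    hderiv, hmonic.leadingCoeff, mul_one, natDegree_derivative, pb.finrank, pb.natDegree_minpoly,
    ← mul_assoc, ← mul_pow]
  norm_num

end PowerBasis

section Discriminant

theorem discr_aeval_of_natDegree_le {A B : Type*} [CommRing A] [CommRing B] [Algebra A B] (x : B)
    {n : ℕ} {Q : Fin n → A[X]} (hdeg : ∀ i, (Q i).natDegree ≤ i) :
    Algebra.discr A (fun i => aeval x (Q i)) =
      (∏ i, (Q i).coeff i) ^ 2 * Algebra.discr A (fun i : Fin n => x ^ (i : ℕ)) := by
  let T : Matrix (Fin n) (Fin n) A := .of fun i j => (Q j).coeff i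
  have hT : (fun i => aeval x (Q i)) =
      Matrix.vecMul (fun i : Fin n => x ^ (i : ℕ)) (T.map (algebraMap A B)) := by
    ext j
    rw [aeval_eq_sum_range' ((hdeg j).trans_lt j.2), Finset.sum_range]
    simp [Matrix.vecMul, dotProduct, T, Algebra.smul_def, mul_comm]
  have hupper : T.IsUpperTriangular := fun i j hij =>
    coeff_eq_zero_of_natDegree_lt ((hdeg j).trans_lt hij)
  rw [hT, Algebra.discr_of_matrix_vecMul, Matrix.det_of_isUpperTriangular hupper]
  rfl

theorem discr_snoc_powers {A B : Type*} [CommRing A] [CommRing B] [Algebra A B] (x : B) (c : A)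
    {n : ℕ} {G : A[X]} (hG : G.natDegree ≤ n) :
    Algebra.discr A (Fin.snoc (fun i : Fin n => (x - algebraMap A B c) ^ (i : ℕ)) (aeval x G) :
      Fin (n + 1) → B) =
      G.coeff n ^ 2 * Algebra.discr A (fun i : Fin (n + 1) => x ^ (i : ℕ)) := by
  nontriviality A
  let Q : Fin (n + 1) → A[X] := Fin.snoc (fun i : Fin n => (X - C c) ^ (i : ℕ)) G
  have hmonic (i : ℕ) : ((X - C c) ^ i).Monic := (monic_X_sub_C c).pow i
  have hnat (i : ℕ) : ((X - C c) ^ i).natDegree = i := by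
    rw [(monic_X_sub_C c).natDegree_pow, natDegree_X_sub_C, mul_one]
  have hdeg (i) : (Q i).natDegree ≤ i := by
    induction i using Fin.lastCases with
    | last => simpa [Q] using hG
    | cast i => simp [Q, hnat]
  have hcoeff (i : Fin n) : (Q i.castSucc).coeff i = 1 := by
    simpa [Q, hnat] using (hmonic i).coeff_natDegree
  have hprod : ∏ i, (Q i).coeff i = G.coeff n := by
    simp_rw [Fin.prod_univ_castSucc, Fin.val_castSucc, hcoeff, Finset.prod_const_one, one_mul]
    simp [Q]
  rw [← hprod, ← discr_aeval_of_natDegree_le x hdeg]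
  congr 1
  ext i
  induction i using Fin.lastCases <;> simp [Q]

theorem sq_mul_discr_snoc_powers {K : Type*} [Field K] [CharZero K] {F : ℤ[X]} {α b : K} {n : ℕ}
    {c a : ℤ} (hmonic : F.Monic) (hdeg : F.natDegree = n + 1) (hα : aeval α F = 0)
    (hval : F.eval c ≠ 0) (ha : a ≠ 0) (hb : (α - c) * (a * b) = -((F.eval c : ℤ) : K)) :
    a ^ 2 * Algebra.discr ℚ (Fin.snoc (fun i : Fin n => (α - c) ^ (i : ℕ)) b : Fin (n + 1) → K) =
      Algebra.discr ℚ (fun i : Fin (n + 1) => α ^ (i : ℕ)) := by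
  let G := F /ₘ (X - C c)
  have hG : F = C (F.eval c) + (X - C c) * G := by
    rw [X_sub_C_mul_divByMonic_eq_sub_modByMonic, modByMonic_X_sub_C_eq_C_eval, add_sub_cancel]
  have hGdeg : G.natDegree = n := by
    rw [natDegree_divByMonic _ (monic_X_sub_C c), hdeg, natDegree_X_sub_C, Nat.add_sub_cancel]
  have hFdeg : F.degree ≠ 0 := by
    rw [degree_eq_natDegree hmonic.ne_zero, hdeg]
    exact_mod_cast n.succ_ne_zero
  have hGcoeff : G.coeff n = 1 := by
    rw [← hGdeg, coeff_natDegree, leadingCoeff_divByMonic_X_sub_C _ hFdeg, hmonic]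
  have ha' : (a : K) ≠ 0 := Int.cast_ne_zero.2 ha
  have hGb : aeval α (C (a : ℚ)⁻¹ * G.map (Int.castRingHom ℚ)) = b := by
    have hroot := hα
    rw [hG] at hroot
    simp only [map_add, map_mul, map_sub, aeval_X, eq_intCast, map_intCast] at hroot
    have hαc : α - c ≠ 0 := fun h => hval (by simpa [h] using hroot)
    rw [map_mul, aeval_C, map_inv₀, map_intCast, ← algebraMap_int_eq, aeval_map_algebraMap,
      inv_mul_eq_iff_eq_mul₀ ha']
    exact mul_left_cancel₀ hαc (by linear_combination hroot - hb)
  have hsnoc := discr_snoc_powers α (c : ℚ) <|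
    (natDegree_C_mul_le (a : ℚ)⁻¹ (G.map (Int.castRingHom ℚ))).trans
      (natDegree_map_le.trans hGdeg.le)
  rw [hGb, map_intCast, coeff_C_mul, coeff_map, hGcoeff, map_one, mul_one] at hsnoc
  rw [hsnoc, ← mul_assoc, ← mul_pow, mul_inv_cancel₀ (Int.cast_ne_zero.2 ha), one_pow, one_mul]

end Discriminant

/-- The family `w` is linearly independent modulo `ℓ`: an integer combination of the `w i` is
divisible by `ℓ` only if all its coefficients are. When `w` spans a subgroup of finite index of a
free `ℤ`-module, this says that `ℓ` does not divide the index. -/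
def LinIndepMod {A ι : Type*} [CommRing A] [Fintype ι] (ℓ : ℕ) (w : ι → A) : Prop :=
  ∀ u : ι → ℤ, (ℓ : A) ∣ ∑ i, u i • w i → ∀ i, (ℓ : ℤ) ∣ u i

section Index

variable {A ι : Type*} [CommRing A] [Fintype ι] [DecidableEq ι]

theorem LinIndepMod.not_dvd_det_toMatrix {ℓ : ℕ} (hℓ : ℓ.Prime) {w : ι → A}
    (hw : LinIndepMod ℓ w) (b : Module.Basis ι ℤ A) : ¬ (ℓ : ℤ) ∣ (b.toMatrix w).det := by
  have : Fact ℓ.Prime := ⟨hℓ⟩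
  intro hdvd
  have hdet : ((b.toMatrix w).map (Int.castRingHom (ZMod ℓ))).det = 0 := by
    rw [← RingHom.mapMatrix_apply, ← RingHom.map_det]
    exact (ZMod.intCast_zmod_eq_zero_iff_dvd _ ℓ).2 hdvd
  obtain ⟨v, hv, hker⟩ := Matrix.exists_mulVec_eq_zero_iff.2 hdet
  choose u hu using fun i => ZMod.intCast_surjective (v i)
  have hcoord (i : ι) : (ℓ : ℤ) ∣ ∑ j, u j * b.toMatrix w i j := by
    rw [← ZMod.intCast_zmod_eq_zero_iff_dvd]
    simpa [Matrix.mulVec, dotProduct, hu, mul_comm] using congrFun hker i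
  have hsum : ∑ j, u j • w j = ∑ i, (∑ j, u j * b.toMatrix w i j) • b i := by
    simp_rw [Finset.sum_smul, mul_smul]
    rw [Finset.sum_comm]
    simp_rw [← Finset.smul_sum, b.sum_toMatrix_smul_self]
  have hdvd_sum : (ℓ : A) ∣ ∑ j, u j • w j := by
    rw [hsum]
    refine Finset.dvd_sum fun i _ => ?_
    obtain ⟨k, hk⟩ := hcoord i
    exact ⟨k • b i, by rw [hk, mul_smul]; simp⟩
  refine hv (funext fun i => ?_)
  rw [← hu, Pi.zero_apply, ZMod.intCast_zmod_eq_zero_iff_dvd]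
  exact hw u hdvd_sum i

open NumberField in
theorem discr_eq_discr_of_linIndepMod {K : Type*} [Field K] [NumberField K] {w : ι → 𝓞 K}
    (hcard : Fintype.card ι = Module.finrank ℚ K)
    (hw : ∀ ℓ : ℕ, ℓ.Prime → (ℓ : ℤ) ^ 2 ∣ Algebra.discr ℤ w → LinIndepMod ℓ w) :
    discr K = Algebra.discr ℤ w := by
  have e : Module.Free.ChooseBasisIndex ℤ (𝓞 K) ≃ ι := Fintype.equivOfCardEq <| by
    rw [← Module.finrank_eq_card_chooseBasisIndex, RingOfIntegers.rank, hcard]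
  let b := (RingOfIntegers.basis K).reindex e
  have hdiscr : Algebra.discr ℤ w = (b.toMatrix w).det ^ 2 * discr K := by
    rw [← discr_eq_discr K b, ← Algebra.discr_of_matrix_vecMul, b.toMatrix_map_vecMul]
  have hunit : IsUnit (b.toMatrix w).det := by
    rw [Int.isUnit_iff_natAbs_eq, Nat.eq_one_iff_not_exists_prime_dvd]
    intro ℓ hℓ hdvd
    rw [← Int.natCast_dvd] at hdvd
    refine (hw ℓ hℓ ?_).not_dvd_det_toMatrix hℓ b hdvd
    exact hdiscr ▸ (pow_dvd_pow_of_dvd hdvd 2).mul_right _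
  rw [hdiscr, Int.isUnit_sq hunit, one_mul]

end Index

section PrimeIdeals

variable {A : Type*} [CommRing A]

theorem exists_isPrime_of_not_isCoprime {x y : A} (h : ¬ IsCoprime x y) :
    ∃ 𝔭 : Ideal A, 𝔭.IsPrime ∧ x ∈ 𝔭 ∧ y ∈ 𝔭 := by
  rw [← Ideal.isCoprime_span_singleton_iff, Ideal.isCoprime_iff_sup_eq] at h
  obtain ⟨𝔪, hmax, hle⟩ := Ideal.exists_le_maximal _ h
  rw [sup_le_iff, Ideal.span_singleton_le_iff_mem, Ideal.span_singleton_le_iff_mem] at hle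
  exact ⟨𝔪, hmax.isPrime, hle⟩

theorem dvd_of_intCast_mem {ℓ : ℕ} (hℓ : ℓ.Prime) {𝔭 : Ideal A} (h𝔭 : 𝔭 ≠ ⊤) (hmem : (ℓ : A) ∈ 𝔭)
    {n : ℤ} (hn : (n : A) ∈ 𝔭) : (ℓ : ℤ) ∣ n := by
  by_contra hndvd
  obtain ⟨a, b, hab⟩ := (Prime.coprime_iff_not_dvd (Nat.prime_iff_prime_int.1 hℓ)).2 hndvd
  apply (Ideal.ne_top_iff_one 𝔭).1 h𝔭
  have hone : (a : A) * ℓ + b * n = 1 := by exact_mod_cast congrArg (Int.cast : ℤ → A) hab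
  exact hone ▸ 𝔭.add_mem (𝔭.mul_mem_left _ hmem) (𝔭.mul_mem_left _ hn)

variable [IsDomain A] [CharZero A] {ℓ : ℕ} {𝔭 𝔮 : Ideal A}

theorem dvd_of_dvd_mul_sum_pow (hℓ : ℓ.Prime) [h𝔭 : 𝔭.IsPrime] (hmem : (ℓ : A) ∈ 𝔭) {π ε s : A}
    {e : ℕ} (hπ : π ^ e = ℓ * ε) (hε : ε ∉ 𝔭) (hs : s ∉ 𝔭) {v : Fin e → ℤ}
    (hv : (ℓ : A) ∣ s * ∑ i, v i • π ^ (i : ℕ)) (i : Fin e) : (ℓ : ℤ) ∣ v i := by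
  have hπ_mem : π ∈ 𝔭 := h𝔭.mem_of_pow_mem e (hπ ▸ 𝔭.mul_mem_right _ hmem)
  induction i using WellFoundedLT.induction with
  | ind i ih =>
    -- Multiplying by `π ^ (e - 1 - i)` makes every term other than the `i`-th divisible by `ℓ`.
    have hothers : (ℓ : A) ∣ ∑ j ∈ Finset.univ.erase i, v j * π ^ (j + (e - 1 - i) : ℕ) := by
      refine Finset.dvd_sum fun j hj => ?_
      rcases lt_or_gt_of_ne (Finset.ne_of_mem_erase hj) with hji | hij
      · have hdvd := Int.cast_dvd_cast (α := A) _ _ (ih j hji)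
        rw [Int.cast_natCast] at hdvd
        exact hdvd.mul_right _
      · rw [show (j : ℕ) + (e - 1 - i) = e + (j - i - 1) by omega, pow_add, hπ]
        exact (((Dvd.intro _ rfl).mul_right _).mul_left _)
    have hterm : (ℓ : A) ∣ s * (v i * π ^ (e - 1)) := by
      have h := hv.mul_right (π ^ (e - 1 - i : ℕ))
      simp_rw [mul_assoc, Finset.sum_mul, zsmul_eq_mul, mul_assoc, ← pow_add] at h
      rwa [← Finset.add_sum_erase _ _ (Finset.mem_univ i), mul_add,
        dvd_add_left (hothers.mul_left s), show (i : ℕ) + (e - 1 - i) = e - 1 by omega] at h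
    obtain ⟨g, hg⟩ := hterm
    have hcancel : s * (v i * ε) = π * g := by
      refine mul_left_cancel₀ (Nat.cast_ne_zero.2 hℓ.ne_zero : (ℓ : A) ≠ 0) ?_
      calc (ℓ : A) * (s * (v i * ε)) = s * (v i * π ^ (e - 1 + 1)) := by
            rw [Nat.sub_add_cancel i.pos, hπ]; ring
        _ = ℓ * (π * g) := by linear_combination π * hg
    have hmem_prod : s * (v i * ε) ∈ 𝔭 := hcancel ▸ 𝔭.mul_mem_right _ hπ_mem
    exact dvd_of_intCast_mem hℓ h𝔭.ne_top hmem <|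
      (h𝔭.mem_or_mem ((h𝔭.mem_or_mem hmem_prod).resolve_left hs)).resolve_right hε

theorem linIndepMod_snoc_powers (hℓ : ℓ.Prime) [h𝔭 : 𝔭.IsPrime] (hmem : (ℓ : A) ∈ 𝔭)
    {π ε b b' : A} {e : ℕ} (hπ : π ^ e = ℓ * ε) (hε : ε ∉ 𝔭) (hb' : b' ∉ 𝔭)
    (hbb' : (ℓ : A) ∣ b' * b) [h𝔮 : 𝔮.IsPrime] (hmem' : (ℓ : A) ∈ 𝔮) (hb : b ∉ 𝔮) :
    LinIndepMod ℓ (Fin.snoc (fun i : Fin e => π ^ (i : ℕ)) b : Fin (e + 1) → A) := by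
  intro u hu
  simp only [Fin.sum_univ_castSucc, Fin.snoc_castSucc, Fin.snoc_last] at hu
  have hpow (i : Fin e) : (ℓ : ℤ) ∣ u i.castSucc := by
    refine dvd_of_dvd_mul_sum_pow hℓ hmem hπ hε hb' (v := fun i => u i.castSucc) ?_ i
    have h := hu.mul_left b'
    rwa [mul_add, dvd_add_left] at h
    rw [mul_smul_comm, zsmul_eq_mul]
    exact hbb'.mul_left _
  refine Fin.lastCases ?_ hpow
  have hlast : (ℓ : A) ∣ u (Fin.last e) * b := by
    rw [← zsmul_eq_mul]
    refine (dvd_add_right (Finset.dvd_sum fun i _ => ?_)).1 hu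
    obtain ⟨k, hk⟩ := hpow i
    exact ⟨k • π ^ (i : ℕ), by rw [hk, mul_smul, natCast_zsmul, nsmul_eq_mul]⟩
  exact dvd_of_intCast_mem hℓ h𝔮.ne_top hmem' <|
    (h𝔮.mem_or_mem (𝔮.mem_of_dvd hlast hmem')).resolve_right hb

end PrimeIdeals

section Norm

variable {A : Type*} [CommRing A] [Module.Free ℤ A] {ℓ m j : ℕ}

theorem pow_dvd_norm_of_isCoprime {x y z : A} {k : ℕ} (h : x * y = (ℓ : A) ^ k * z)
    (hcop : IsCoprime (ℓ : A) y) : (ℓ : ℤ) ^ (k * Module.finrank ℤ A) ∣ Algebra.norm ℤ x := by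
  have hdvd : algebraMap ℤ A (ℓ ^ k) ∣ x := by
    rw [map_pow, map_natCast]
    exact hcop.pow_left.dvd_of_dvd_mul_right (Dvd.intro _ h.symm)
  rw [pow_mul, ← Algebra.norm_algebraMap]
  exact map_dvd (Algebra.norm ℤ) hdvd

theorem not_isCoprime_of_not_pow_dvd_norm {x y z : A} (hrank : Module.finrank ℤ A = m + 2)
    (hmj : m < j) (hnorm : ¬ (ℓ : ℤ) ^ (j + 3) ∣ Algebra.norm ℤ x)
    (hxy : x * y = ℓ ^ (j + 1) * z) : ¬ IsCoprime (ℓ : A) y := by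
  intro hcop
  refine hnorm ((pow_dvd_pow _ ?_).trans (pow_dvd_norm_of_isCoprime hxy hcop))
  rw [hrank]
  nlinarith

variable [IsDomain A] [CharZero A]

theorem not_isCoprime_of_pow_dvd_norm (hℓ : ℓ.Prime) (hrank : Module.finrank ℤ A = m + 2)
    (hmj : m < j) {f : ℤ} (hf : ¬ (ℓ : ℤ) ∣ f) {x y z w : A}
    (hnorm : (ℓ : ℤ) ^ (j + 2) ∣ Algebra.norm ℤ x) (hxy : x * y = ℓ ^ (j + 1) * f)
    (hzy : y * z = ℓ ^ j * w) : ¬ IsCoprime (ℓ : A) z := by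
  intro hcop
  obtain ⟨e, rfl⟩ := hcop.pow_left.dvd_of_dvd_mul_right (Dvd.intro _ hzy.symm)
  have hxe : x * e = algebraMap ℤ A (ℓ * f) := by
    refine mul_left_cancel₀ (pow_ne_zero j (Nat.cast_ne_zero.2 hℓ.ne_zero : (ℓ : A) ≠ 0)) ?_
    rw [map_mul, map_natCast, algebraMap_int_eq, eq_intCast]
    linear_combination hxy
  have hdvd : (ℓ : ℤ) ^ (j + 2) ∣ f ^ (m + 2) * ℓ ^ (m + 2) := by
    rw [← mul_pow, mul_comm f, ← hrank, ← Algebra.norm_algebraMap (S := A), ← hxe, map_mul]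
    exact hnorm.mul_right _
  have hprime := Nat.prime_iff_prime_int.1 hℓ
  have hle := (pow_dvd_pow_iff hprime.ne_zero hprime.not_isUnit).1
    (hprime.pow_dvd_of_dvd_mul_left _ (mt hprime.dvd_of_dvd_pow hf) hdvd)
  omega

theorem linIndepMod_of_double_root (hℓ : ℓ.Prime) (hrank : Module.finrank ℤ A = m + 2)
    (hmj : m < j) {f s t : ℤ} (hf : ¬ (ℓ : ℤ) ∣ f) (hs : ¬ (ℓ : ℤ) ∣ s) (ht : ¬ (ℓ : ℤ) ∣ t)
    {π d h H : A}
    (hnorm : (ℓ : ℤ) ^ (j + 2) ∣ Algebra.norm ℤ π)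
    (hnorm' : ¬ (ℓ : ℤ) ^ (j + 3) ∣ Algebra.norm ℤ π)
    (hpow : π ^ (m + 1) = ℓ * (f * d - π * H)) (hmul : π * (d + t) = ℓ ^ (j + 1) * (f * s : ℤ))
    (hconj : d * (d + t) = ℓ ^ j * h) :
    LinIndepMod ℓ (Fin.snoc (fun i : Fin (m + 1) => π ^ (i : ℕ)) (d + t) : Fin (m + 2) → A) := by
  obtain ⟨𝔭, h𝔭, hℓ𝔭, hb𝔭⟩ := exists_isPrime_of_not_isCoprime
    (not_isCoprime_of_not_pow_dvd_norm hrank hmj hnorm' hmul)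
  obtain ⟨𝔮, h𝔮, hℓ𝔮, hd𝔮⟩ := exists_isPrime_of_not_isCoprime
    (not_isCoprime_of_pow_dvd_norm hℓ hrank hmj
      ((Nat.prime_iff_prime_int.1 hℓ).not_dvd_mul hf hs) hnorm hmul (mul_comm d _ ▸ hconj))
  have hd𝔭 : d ∉ 𝔭 := fun hd =>
    ht (dvd_of_intCast_mem hℓ h𝔭.ne_top hℓ𝔭 ((𝔭.add_mem_iff_right hd).1 hb𝔭))
  have hπ𝔭 : π ∈ 𝔭 := h𝔭.mem_of_pow_mem _ (hpow ▸ 𝔭.mul_mem_right _ hℓ𝔭)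
  refine linIndepMod_snoc_powers (𝔭 := 𝔭) (𝔮 := 𝔮) hℓ hℓ𝔭 hpow (fun hε => ?_) hd𝔭 ?_ hℓ𝔮
    fun hb => ?_
  · have hfd := (𝔭.sub_mem_iff_left (𝔭.mul_mem_right H hπ𝔭)).1 hε
    exact hf (dvd_of_intCast_mem hℓ h𝔭.ne_top hℓ𝔭 ((h𝔭.mem_or_mem hfd).resolve_right hd𝔭))
  · rw [hconj]
    exact (dvd_pow_self _ (by omega)).mul_right _
  · exact ht (dvd_of_intCast_mem hℓ h𝔮.ne_top hℓ𝔮 ((𝔮.add_mem_iff_right hd𝔮).1 hb))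

end Norm

section DoubleRoot

theorem exists_expansion_of_C_dvd_sub_X_sub_C_pow {R : Type*} [CommRing R] {F : R[X]} {c ℓ : R}
    {m : ℕ} (hF : C ℓ ∣ F - (X - C c) ^ (m + 2)) :
    ∃ H : R[X], F = C (F.eval c) + (X - C c) *
      (C (F.derivative.eval c) + (X - C c) * ((X - C c) ^ m + C ℓ * H)) := by
  obtain ⟨G, hG⟩ := hF
  have hF' : F = (X - C c) ^ (m + 2) + C ℓ * G := by linear_combination hG
  have hval : F.eval c = ℓ * G.eval c := by simp [hF']
  have hderiv : F.derivative.eval c = ℓ * G.derivative.eval c := by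
    simp [hF', derivative_X_sub_C_pow]
  obtain ⟨H, hH⟩ := (G.map C).binomExpansion (C c) (X - C c)
  rw [add_sub_cancel, derivative_map, eval_map, eval₂_C_X, eval_map_apply, eval_map_apply] at hH
  refine ⟨H, ?_⟩
  rw [hval, hderiv, map_mul, map_mul]
  linear_combination hF' + C ℓ * hH

theorem C_dvd_sub_of_map_eq {ℓ : ℕ} {F G : ℤ[X]}
    (h : F.map (Int.castRingHom (ZMod ℓ)) = G.map (Int.castRingHom (ZMod ℓ))) :
    C (ℓ : ℤ) ∣ F - G := by
  refine (C_dvd_iff_dvd_coeff _ _).2 fun i => ?_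
  rw [← ZMod.intCast_zmod_eq_zero_iff_dvd, ← eq_intCast (Int.castRingHom (ZMod ℓ)), ← coeff_map,
    Polynomial.map_sub, h, sub_self, coeff_zero]

/-- Approximate double root data: `F` is `(X - c) ^ (m + 2)` modulo the prime `ℓ`, and `c` is a
double root of `F` modulo `ℓ * f` in the sense that `(ℓ * f) ^ 2 ∣ F(c)` and `ℓ * f ∣ F'(c)`.
Moreover `F'(c)` has `ℓ`-adic valuation exactly `1` and `F(c)` has `ℓ`-adic valuation exactly
`j + 2`; the bound `m < j` forces at least two primes to lie above `ℓ`. -/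
structure IsApproxDoubleRoot (F : ℤ[X]) (ℓ m j : ℕ) (c f s t : ℤ) : Prop where
  prime : ℓ.Prime
  lt : m < j
  map_eq : F.map (Int.castRingHom (ZMod ℓ)) = (X - C (c : ZMod ℓ)) ^ (m + 2)
  eval_eq : F.eval c = (ℓ * f) ^ 2 * (ℓ ^ j * s)
  derivative_eval_eq : F.derivative.eval c = ℓ * f * t
  not_dvd_f : ¬ (ℓ : ℤ) ∣ f
  not_dvd_s : ¬ (ℓ : ℤ) ∣ s
  not_dvd_t : ¬ (ℓ : ℤ) ∣ t

namespace IsApproxDoubleRoot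

variable {F : ℤ[X]} {ℓ m j : ℕ} {c f s t : ℤ}

theorem C_dvd_sub_pow (h : IsApproxDoubleRoot F ℓ m j c f s t) :
    C (ℓ : ℤ) ∣ F - (X - C c) ^ (m + 2) :=
  C_dvd_sub_of_map_eq (by simpa using h.map_eq)

theorem modulus_ne_zero (h : IsApproxDoubleRoot F ℓ m j c f s t) : (ℓ * f : ℤ) ≠ 0 :=
  mul_ne_zero (Int.natCast_ne_zero.2 h.prime.ne_zero) fun hf => h.not_dvd_f (hf ▸ dvd_zero _)

theorem eval_ne_zero (h : IsApproxDoubleRoot F ℓ m j c f s t) : F.eval c ≠ 0 := by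
  rw [h.eval_eq]
  exact mul_ne_zero (pow_ne_zero 2 h.modulus_ne_zero) <|
    mul_ne_zero (pow_ne_zero j (Int.natCast_ne_zero.2 h.prime.ne_zero)) fun hs =>
      h.not_dvd_s (hs ▸ dvd_zero _)

theorem pow_dvd_eval (h : IsApproxDoubleRoot F ℓ m j c f s t) : (ℓ : ℤ) ^ (j + 2) ∣ F.eval c :=
  ⟨f ^ 2 * s, by rw [h.eval_eq]; ring⟩

theorem not_pow_dvd_eval (h : IsApproxDoubleRoot F ℓ m j c f s t) :
    ¬ (ℓ : ℤ) ^ (j + 3) ∣ F.eval c := by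
  have hprime := Nat.prime_iff_prime_int.1 h.prime
  have heval : F.eval c = (ℓ : ℤ) ^ (j + 2) * (f ^ 2 * s) := by rw [h.eval_eq]; ring
  rw [heval, pow_succ _ (j + 2), mul_dvd_mul_iff_left (pow_ne_zero _ hprime.ne_zero)]
  exact hprime.not_dvd_mul (mt hprime.dvd_of_dvd_pow h.not_dvd_f) h.not_dvd_s

end IsApproxDoubleRoot

variable {A : Type*} [CommRing A] [IsDomain A] [IsIntegrallyClosed A]

theorem exists_mul_eq_of_double_root {f s t π h : A} (hf : f ≠ 0)
    (h0 : f ^ 2 * s + f * t * π + π ^ 2 * h = 0) :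
    ∃ d, f * d = π * h ∧ π * (d + t) = -(f * s) ∧ d * (d + t) = -(s * h) := by
  let φ := algebraMap A (FractionRing A)
  have hinj : Function.Injective φ := IsFractionRing.injective A _
  have hφf : φ f ≠ 0 := (map_ne_zero_iff φ hinj).2 hf
  have h0' := congrArg φ h0
  simp only [map_add, map_mul, map_pow, map_zero] at h0'
  -- `d = π * h / f` is a root of the monic polynomial `X ^ 2 + t * X + s * h`.
  have hroot : aeval (φ π * φ h / φ f) (X ^ 2 + C t * X + C (s * h)) = 0 := by
    simp only [map_add, map_mul, map_pow, aeval_X, aeval_C]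
    field_simp
    linear_combination φ h * h0'
  obtain ⟨d, hd⟩ := IsIntegrallyClosed.algebraMap_eq_of_integral (R := A)
    (⟨_, by monicity!, hroot⟩ : IsIntegral A (φ π * φ h / φ f))
  have hfd : f * d = π * h := hinj <| by
    rw [map_mul, map_mul]
    exact hd ▸ mul_div_cancel₀ _ hφf
  refine ⟨d, hfd, mul_left_cancel₀ hf ?_, mul_left_cancel₀ (pow_ne_zero 2 hf) ?_⟩
  · linear_combination π * hfd + h0
  · linear_combination (f * d + f * t + π * h) * hfd + h * h0

theorem IsApproxDoubleRoot.exists_linIndepMod [CharZero A] [Module.Free ℤ A] {F : ℤ[X]}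
    {ℓ m j : ℕ} {c f s t : ℤ} (h : IsApproxDoubleRoot F ℓ m j c f s t)
    (hrank : Module.finrank ℤ A = m + 2) {α : A}
    (hα : aeval α F = 0) (hnorm : Associated (Algebra.norm ℤ (α - c)) (F.eval c)) :
    ∃ b, (α - c) * ((ℓ * f : ℤ) * b) = -((F.eval c : ℤ) : A) ∧
      LinIndepMod ℓ (Fin.snoc (fun i : Fin (m + 1) => (α - c) ^ (i : ℕ)) b : Fin (m + 2) → A) := by
  obtain ⟨H, hH⟩ := exists_expansion_of_C_dvd_sub_X_sub_C_pow h.C_dvd_sub_pow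
  have hroot := hα
  rw [hH, h.eval_eq, h.derivative_eval_eq] at hroot
  simp only [map_add, map_mul, map_sub, map_pow, aeval_X, eq_intCast, map_intCast,
    map_natCast] at hroot
  have hℓ0 : (ℓ : A) ≠ 0 := Nat.cast_ne_zero.2 h.prime.ne_zero
  have hℓf : (ℓ * f : A) ≠ 0 := by exact_mod_cast h.modulus_ne_zero
  obtain ⟨d, hd, hmul, hconj⟩ := exists_mul_eq_of_double_root (f := (ℓ * f : A)) (s := ℓ ^ j * s)
    (t := t) (π := α - c) (h := (α - c) ^ m + ℓ * aeval α H) hℓf (by linear_combination hroot)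
  refine ⟨d + t, ?_, ?_⟩
  · rw [h.eval_eq]
    push_cast
    linear_combination ℓ * f * hmul
  refine linIndepMod_of_double_root (f := f) (s := -s) (t := t) (H := aeval α H)
    (h := -(s * ((α - c) ^ m + ℓ * aeval α H))) h.prime hrank h.lt h.not_dvd_f
    (by simpa using h.not_dvd_s) h.not_dvd_t (hnorm.dvd_iff_dvd_right.2 h.pow_dvd_eval)
    (mt hnorm.dvd_iff_dvd_right.1 h.not_pow_dvd_eval) ?_ ?_ ?_
  · exact mul_left_cancel₀ hℓ0 (by linear_combination -ℓ * hd)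
  · push_cast
    linear_combination hmul
  · linear_combination hconj

end DoubleRoot

section NumberField

open NumberField

variable {K : Type*} [Field K] [NumberField K]

theorem coe_discr_int {ι : Type*} [Fintype ι] [DecidableEq ι] (w : ι → 𝓞 K) :
    (Algebra.discr ℤ w : ℚ) = Algebra.discr ℚ (fun i => (w i : K)) := by
  rw [Algebra.discr_def, Algebra.discr_def, Int.cast_det]
  congr 1
  ext i j
  exact Algebra.coe_trace_int (K := K) (w i * w j)

theorem coe_discr_int_snoc_powers (α b : 𝓞 K) (c : ℤ) (n : ℕ) :
    ((Algebra.discr ℤ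
      (Fin.snoc (fun i : Fin n => (α - c) ^ (i : ℕ)) b : Fin (n + 1) → 𝓞 K) : ℤ) : ℚ) =
      Algebra.discr ℚ
        (Fin.snoc (fun i : Fin n => ((α : K) - c) ^ (i : ℕ)) (b : K) : Fin (n + 1) → K) := by
  rw [coe_discr_int]
  congr 1
  ext i
  induction i using Fin.lastCases <;> simp

variable {pb : PowerBasis ℚ K} {F : ℤ[X]}

theorem associated_norm_sub_intCast (hF : minpoly ℚ pb.gen = F.map (Int.castRingHom ℚ))
    {α : 𝓞 K} (hα : (α : K) = pb.gen) (c : ℤ) :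
    Associated (Algebra.norm ℤ (α - c)) (F.eval c) := by
  have hnorm : Algebra.norm ℤ (α - c) = (-1) ^ pb.dim * F.eval c := by
    rw [← Int.cast_inj (α := ℚ), Algebra.coe_norm_int]
    have h := norm_gen_sub_algebraMap pb (c : ℚ)
    rw [hF, ← eq_intCast (Int.castRingHom ℚ) c, eval_map_apply] at h
    simpa [hα] using h
  rw [hnorm]
  exact (associated_isUnit_mul_left_iff (isUnit_one.neg.pow _)).2 (Associated.refl _)

variable {ℓ m j : ℕ} {c f s t : ℤ}

theorem IsApproxDoubleRoot.exists_linIndepMod_discr_eq (h : IsApproxDoubleRoot F ℓ m j c f s t)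
    (hF : minpoly ℚ pb.gen = F.map (Int.castRingHom ℚ)) (hdim : pb.dim = m + 2) :
    ∃ w : Fin (m + 2) → 𝓞 K, LinIndepMod ℓ w ∧
      ((ℓ * f : ℤ) : ℚ) ^ 2 * (Algebra.discr ℤ w : ℤ) = (minpoly ℚ pb.gen).discr := by
  have hinj : Function.Injective (Int.castRingHom ℚ) := Int.cast_injective
  have hmonic : F.Monic := monic_of_injective hinj (hF ▸ minpoly.monic pb.isIntegral_gen)
  have hdeg : F.natDegree = m + 2 := by
    rw [← hdim, ← pb.natDegree_minpoly, hF, natDegree_map_eq_of_injective hinj]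
  have hroot : aeval pb.gen F = 0 := by
    rw [← aeval_map_algebraMap ℚ, algebraMap_int_eq, ← hF, minpoly.aeval]
  obtain ⟨α, hα⟩ : ∃ α : 𝓞 K, (α : K) = pb.gen := ⟨⟨pb.gen, F, hmonic, hroot⟩, rfl⟩
  have hαroot : aeval α F = 0 :=
    (aeval_algebraMap_eq_zero_iff K α F).1 ((congrArg (aeval · F) hα).trans hroot)
  obtain ⟨b, hb, hindep⟩ := h.exists_linIndepMod
    ((RingOfIntegers.rank K).trans (pb.finrank.trans hdim)) hαroot
    (associated_norm_sub_intCast hF hα c)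
  refine ⟨_, hindep, ?_⟩
  rw [coe_discr_int_snoc_powers, hα, ← discr_gen_powers_eq_discr_minpoly pb hdim]
  exact sq_mul_discr_snoc_powers hmonic hdeg hroot h.eval_ne_zero h.modulus_ne_zero
    (by simpa [hα] using congrArg (algebraMap (𝓞 K) K) hb)

theorem IsApproxDoubleRoot.discr_eq (h : IsApproxDoubleRoot F ℓ m j c f s t)
    (hF : minpoly ℚ pb.gen = F.map (Int.castRingHom ℚ)) (hdim : pb.dim = m + 2) {D : ℤ} {e : ℕ}
    (hdiscr : (minpoly ℚ pb.gen).discr = D * (ℓ * f) ^ 2) (hD : D ∣ ℓ ^ e) :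
    NumberField.discr K = D := by
  obtain ⟨w, hw, hdiscr_w⟩ := h.exists_linIndepMod_discr_eq hF hdim
  have hwD : Algebra.discr ℤ w = D := by
    rw [hdiscr, mul_comm] at hdiscr_w
    exact mul_right_cancel₀ (pow_ne_zero 2 h.modulus_ne_zero) (by exact_mod_cast hdiscr_w)
  rw [← hwD]
  refine discr_eq_discr_of_linIndepMod
    (by rw [Fintype.card_fin, pb.finrank, hdim]) fun q hq hqD => ?_
  have hqℓ : q ∣ ℓ ^ e := by
    exact_mod_cast ((dvd_pow_self _ two_ne_zero).trans hqD).trans (hwD ▸ hD)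
  rwa [(Nat.prime_dvd_prime_iff_eq hq h.prime).1 (hq.dvd_of_dvd_pow hqℓ)]

end NumberField

section Coefficients

variable {R : Type*} [CommRing R]

/-- The polynomial with the given coefficients, leading coefficient first. Lists of coefficients
make resultants, values and derivatives computable by kernel evaluation. -/
noncomputable def ofCoeffs : List R → R[X]
  | [] => 0
  | a :: l => C a * X ^ l.length + ofCoeffs l

/-- The coefficients of the derivative of `ofCoeffs l`. -/
def derivCoeffs : List R → List R
  | [] => []
  | [_] => []
  | a :: b :: l => (l.length + 1) * a :: derivCoeffs (b :: l)

theorem degree_ofCoeffs_lt (l : List R) : (ofCoeffs l).degree < l.length := by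
  induction l with
  | nil => simp [ofCoeffs]
  | cons a l ih =>
    have hlen : (l.length : WithBot ℕ) < (a :: l).length := by
      exact_mod_cast Nat.lt_succ_self l.length
    exact (degree_add_le _ _).trans_lt
      (max_lt ((degree_C_mul_X_pow_le _ _).trans_lt hlen) (ih.trans hlen))

theorem natDegree_ofCoeffs_le (l : List R) : (ofCoeffs l).natDegree ≤ l.length - 1 := by
  by_cases h : ofCoeffs l = 0
  · simp [h]
  · exact Nat.le_sub_one_of_lt ((natDegree_lt_iff_degree_lt h).2 (degree_ofCoeffs_lt l))

theorem coeff_ofCoeffs_cons_length (a : R) (l : List R) :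
    (ofCoeffs (a :: l)).coeff l.length = a := by
  simp [ofCoeffs, coeff_eq_zero_of_degree_lt (degree_ofCoeffs_lt l)]

theorem map_ofCoeffs {S : Type*} [CommRing S] (φ : R →+* S) (l : List R) :
    (ofCoeffs l).map φ = ofCoeffs (l.map φ) := by
  induction l with
  | nil => simp [ofCoeffs]
  | cons a l ih => simp [ofCoeffs, ih]

theorem eval_ofCoeffs (l : List R) (x : R) :
    (ofCoeffs l).eval x = l.foldl (fun v a => v * x + a) 0 := by
  suffices h : ∀ v, v * x ^ l.length + (ofCoeffs l).eval x = l.foldl (fun v a => v * x + a) v by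
    simpa using h 0
  induction l with
  | nil => simp [ofCoeffs]
  | cons a l ih =>
    intro v
    rw [List.foldl_cons, ← ih]
    simp only [ofCoeffs, eval_add, eval_mul, eval_C, eval_pow, eval_X, List.length_cons]
    ring

theorem length_derivCoeffs : ∀ l : List R, (derivCoeffs l).length = l.length - 1
  | [] => rfl
  | [_] => rfl
  | _ :: b :: l => by simp [derivCoeffs, length_derivCoeffs (b :: l)]

theorem derivative_ofCoeffs : ∀ l : List R, derivative (ofCoeffs l) = ofCoeffs (derivCoeffs l)
  | [] => by simp [ofCoeffs, derivCoeffs]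
  | [a] => by simp [ofCoeffs, derivCoeffs]
  | a :: b :: l => by
    change derivative (C a * X ^ (b :: l).length + ofCoeffs (b :: l)) =
      C ((l.length + 1) * a) * X ^ (derivCoeffs (b :: l)).length + ofCoeffs (derivCoeffs (b :: l))
    rw [derivative_add, derivative_ofCoeffs (b :: l), length_derivCoeffs, derivative_C_mul_X_pow]
    simp [mul_comm]

theorem ofCoeffs_append_replicate_zero (l : List R) (k : ℕ) :
    ofCoeffs (l ++ List.replicate k 0) = X ^ k * ofCoeffs l := by
  induction l with
  | nil => induction k with
    | zero => simp [ofCoeffs]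
    | succ k ih => simpa [ofCoeffs, List.replicate_succ] using ih
  | cons a l ih =>
    simp only [List.cons_append, ofCoeffs, ih, List.length_append, List.length_replicate]
    ring

theorem ofCoeffs_zipWith_sub_mul (q : R) : ∀ {f g : List R}, f.length = g.length →
    ofCoeffs (List.zipWith (fun x y => x - q * y) f g) = ofCoeffs f - C q * ofCoeffs g
  | [], [], _ => by simp [ofCoeffs]
  | a :: f, b :: g, h => by
    have hlen : f.length = g.length := by simpa using h
    simp only [List.zipWith_cons_cons, ofCoeffs, ofCoeffs_zipWith_sub_mul q hlen,
      List.length_zipWith, hlen, min_self, map_sub, map_mul]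
    ring

end Coefficients

section Resultant

variable {K : Type*} [Field K]

/-- One step of polynomial division: the coefficients of `a :: f` minus a multiple of `b :: g`, for
`q = a / b`, with the vanishing leading coefficient dropped. -/
def reduceCoeffs (q : K) (f g : List K) : List K :=
  List.zipWith (fun x y => x - q * y) f (g ++ List.replicate (f.length - g.length) 0)

/-- The resultant of two polynomials given by their coefficients, computed by the Euclidean
algorithm. The first argument bounds the number of steps. The value is the junk value `0` when this
bound is too small or when a division by a vanishing leading coefficient occurs. -/
def euclidResultant : ℕ → List K → List K → K
  | n + 1, a :: f, b :: g =>
    if f.length < g.length then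
      (-1) ^ (f.length * g.length) * euclidResultant n (b :: g) (a :: f)
    else if f.length = 0 then 1
    else (-1) ^ g.length * b * euclidResultant n (reduceCoeffs (a / b) f g) (b :: g)
  | _, _, _ => 0

theorem length_reduceCoeffs {q : K} {f g : List K} (hle : g.length ≤ f.length) :
    (reduceCoeffs q f g).length = f.length := by
  simp [reduceCoeffs, hle]

theorem ofCoeffs_reduceCoeffs {a b : K} (hb : b ≠ 0) {f g : List K} (hle : g.length ≤ f.length) :
    ofCoeffs (reduceCoeffs (a / b) f g) =
      ofCoeffs (a :: f) - ofCoeffs (b :: g) * (C (a / b) * X ^ (f.length - g.length)) := by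
  have hlen : f.length = (g ++ List.replicate (f.length - g.length) 0).length := by
    simp [hle]
  have hX : (X : K[X]) ^ f.length = X ^ g.length * X ^ (f.length - g.length) := by
    rw [← pow_add, Nat.add_sub_cancel' hle]
  have hC : (C b : K[X]) * C (a / b) = C a := by rw [← C_mul, mul_div_cancel₀ _ hb]
  rw [reduceCoeffs, ofCoeffs_zipWith_sub_mul _ hlen, ofCoeffs_append_replicate_zero, ofCoeffs,
    ofCoeffs, hX]
  linear_combination X ^ g.length * X ^ (f.length - g.length) * hC

theorem resultant_ofCoeffs_reduceCoeffs {a b : K} (hb : b ≠ 0) {f g : List K}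
    (hle : g.length ≤ f.length) {n : ℕ} (hn : f.length = n + 1) :
    (ofCoeffs (a :: f)).resultant (ofCoeffs (b :: g)) (n + 1) g.length =
      (-1) ^ g.length * b *
        (ofCoeffs (reduceCoeffs (a / b) f g)).resultant (ofCoeffs (b :: g)) n g.length := by
  have hdeg : (C (a / b) * X ^ (f.length - g.length) : K[X]).natDegree + g.length ≤ n + 1 := by
    have := natDegree_C_mul_X_pow_le (a / b) (f.length - g.length)
    omega
  have hred : (ofCoeffs (reduceCoeffs (a / b) f g)).natDegree ≤ n := by
    simpa [length_reduceCoeffs hle, hn] using natDegree_ofCoeffs_le (reduceCoeffs (a / b) f g)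
  have hg : (ofCoeffs (b :: g)).natDegree ≤ g.length := natDegree_ofCoeffs_le (b :: g)
  rw [← resultant_add_mul_left _ _ (-(C (a / b) * X ^ (f.length - g.length))) _ _
      (by rwa [natDegree_neg]) hg,
    mul_neg, ← sub_eq_add_neg, ← ofCoeffs_reduceCoeffs hb hle,
    resultant_succ_left_deg _ _ _ _ hred, coeff_ofCoeffs_cons_length]

theorem resultant_ofCoeffs {k : ℕ} {f g : List K} (h : euclidResultant k f g ≠ 0) :
    (ofCoeffs f).resultant (ofCoeffs g) (f.length - 1) (g.length - 1) = euclidResultant k f g := by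
  induction k generalizing f g with
  | zero => exact absurd rfl h
  | succ k ih =>
    obtain _ | ⟨a, f⟩ := f
    · exact absurd rfl h
    obtain _ | ⟨b, g⟩ := g
    · exact absurd rfl h
    rw [euclidResultant] at h ⊢
    simp only [List.length_cons, Nat.add_sub_cancel]
    split_ifs at h ⊢ with hlt hzero
    · rw [resultant_comm, ← ih (right_ne_zero_of_mul h)]
      rfl
    · have hg : g.length = 0 := by omega
      simp [hzero, hg]
    · have hb : b ≠ 0 := right_ne_zero_of_mul (left_ne_zero_of_mul h)
      obtain ⟨n, hn⟩ := Nat.exists_eq_succ_of_ne_zero hzero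
      rw [hn, resultant_ofCoeffs_reduceCoeffs hb (not_lt.1 hlt) hn,
        ← ih (right_ne_zero_of_mul h), length_reduceCoeffs (not_lt.1 hlt), hn]
      rfl

end Resultant

/-- The coefficients of `P`, leading coefficient first. -/
def coeffsP : List ℤ :=
  [1, -4, 0, 0, -155, 713, -2480, 9300, -5921, 24707, 127410, -646195, 747906, -7527575, 4369791,
    -28954961, -40645681, 66421685, -448568729, 751001257, -1820871490, 2531110165, -4120267319,
    4554764528, -5462615927, 4607500922, -4062352344, 2380573824, -1492309000, 521018178,
    -201167463, 20505628, -1261963]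

/-- The part prime to `31` of the index of `ℤ[x]/(P)` in the ring of integers. -/
def indexPrimeTo31 : ℤ :=
  122377706107780110832102018666640596592855297820089939641928042987535578955346930335789419745899037093846010523209818440249649569194789681234629196769439050499979550486

/-- The double root of `P` modulo `31 * indexPrimeTo31`. -/
def doubleRoot : ℤ :=
  -411179142400667996929631127860672413933148185231290620763859399321285277694002858820297190556325534226772377963939095903530650366356533570190491460211702159502299251639711313475041908390356738245279694249367967950946994155641

/-- The unit part at `31` of `P(c) / f ^ 2`, for `c = doubleRoot` and `f = indexPrimeTo31`. -/
def evalCofactor : ℤ :=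
  coeffsP.foldl (fun v a => v * doubleRoot + a) 0 / ((31 * indexPrimeTo31) ^ 2 * 31 ^ 38)

/-- The quotient `P'(c) / (31 * f)`, for `c = doubleRoot` and `f = indexPrimeTo31`. -/
def derivCofactor : ℤ :=
  (derivCoeffs coeffsP).foldl (fun v a => v * doubleRoot + a) 0 / (31 * indexPrimeTo31)

theorem length_coeffsP : coeffsP.length = 33 := rfl

theorem P_eq_map_ofCoeffs : P = (ofCoeffs coeffsP).map (Int.castRingHom ℚ) := by
  simp only [P, coeffsP, ofCoeffs, List.length_cons, List.length_nil, Polynomial.map_add,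
    Polynomial.map_mul, Polynomial.map_pow, map_X, Polynomial.map_neg, Polynomial.map_ofNat,
    Polynomial.map_zero, Polynomial.map_one, map_neg, map_ofNat, map_one, map_zero]
  ring

theorem natDegree_P : P.natDegree = 32 := by
  rw [P]
  compute_degree!

theorem monic_P : P.Monic := by
  rw [P]
  monicity!

theorem euclidResultant_coeffsP_derivCoeffs :
    euclidResultant 100 (coeffsP.map (Int.castRingHom ℚ))
      ((derivCoeffs coeffsP).map (Int.castRingHom ℚ)) = -31 ^ 41 * (31 * indexPrimeTo31) ^ 2 := by
  decide +kernel

theorem discr_polynomial_P : P.discr = -31 ^ 41 * (31 * indexPrimeTo31) ^ 2 := by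
  have hpos : 0 < P.degree := natDegree_pos_iff_degree_pos.1 (by rw [natDegree_P]; norm_num)
  have hderiv := resultant_deriv hpos
  have heuclid := euclidResultant_coeffsP_derivCoeffs
  have hres := resultant_ofCoeffs (heuclid.trans_ne (by decide +kernel))
  rw [List.length_map, List.length_map, length_derivCoeffs, length_coeffsP, heuclid,
    ← map_ofCoeffs, ← map_ofCoeffs, ← derivative_ofCoeffs, ← derivative_map,
    ← P_eq_map_ofCoeffs] at hres
  have hsign : (-1 : ℚ) ^ (32 * (32 - 1) / 2) = 1 := by norm_num
  simp only [natDegree_P, monic_P.leadingCoeff] at hderiv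
  rw [hres, hsign, one_mul, one_mul] at hderiv
  exact hderiv.symm

theorem map_ofCoeffs_coeffsP :
    (ofCoeffs coeffsP).map (Int.castRingHom (ZMod 31)) = (X - C (doubleRoot : ZMod 31)) ^ 32 := by
  have hc : (doubleRoot : ZMod 31) = 4 := by decide +kernel
  have hcoeffs : coeffsP.map (Int.castRingHom (ZMod 31)) =
      [1, -4] ++ List.replicate 29 0 ++ [-4, 16] := by decide +kernel
  have : Fact (Nat.Prime 31) := ⟨by norm_num⟩
  calc (ofCoeffs coeffsP).map (Int.castRingHom (ZMod 31))
      = (X ^ 31 - C 4 ^ 31) * (X - C 4) := by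
        rw [map_ofCoeffs, hcoeffs, ← C_pow, ZMod.pow_card]
        have h16 : (C 16 : (ZMod 31)[X]) = C 4 ^ 2 := by rw [← C_pow]; norm_num
        simp only [List.replicate_succ, List.replicate_zero, List.cons_append, List.nil_append,
          ofCoeffs, map_one, List.length_cons, List.length_nil, map_neg, map_zero, h16]
        ring
    _ = (X - C (doubleRoot : ZMod 31)) ^ 32 := by
        rw [← sub_pow_char, hc, ← pow_succ]

theorem isApproxDoubleRoot_P : IsApproxDoubleRoot (ofCoeffs coeffsP) 31 30 38 doubleRoot
    indexPrimeTo31 evalCofactor derivCofactor where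
  prime := by norm_num
  lt := by norm_num
  map_eq := map_ofCoeffs_coeffsP
  eval_eq := by
    rw [eval_ofCoeffs]
    decide +kernel
  derivative_eval_eq := by
    rw [derivative_ofCoeffs, eval_ofCoeffs]
    decide +kernel
  not_dvd_f := by decide +kernel
  not_dvd_s := by decide +kernel
  not_dvd_t := by decide +kernel

theorem discr_eq_of_minpoly_gen_eq_P {K : Type*} [Field K] [NumberField K] [A : Algebra ℚ K]
    (pb : PowerBasis ℚ K) (hmin : minpoly ℚ pb.gen = P) : NumberField.discr K = -31 ^ 41 := by
  -- The `ℚ`-algebra structure on `AdjoinRoot P` is not definitionally that of a number field.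
  obtain rfl : A = DivisionRing.toRatAlgebra := Subsingleton.elim _ _
  have hdim : pb.dim = 32 := by rw [← pb.natDegree_minpoly, hmin, natDegree_P]
  have hdiscr : (minpoly ℚ pb.gen).discr =
      ((-31 ^ 41 : ℤ) : ℚ) * ((31 : ℕ) * indexPrimeTo31) ^ 2 := by
    rw [hmin, discr_polynomial_P]
    norm_cast
  exact isApproxDoubleRoot_P.discr_eq (e := 41) (hmin.trans P_eq_map_ofCoeffs) hdim hdiscr
    (by norm_num)

theorem discr_P (hP : Irreducible P) :
    haveI : Fact (Irreducible P) := ⟨hP⟩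
    haveI : CharZero (AdjoinRoot P) :=
      charZero_of_injective_algebraMap (algebraMap ℚ (AdjoinRoot P)).injective
    haveI : FiniteDimensional ℚ (AdjoinRoot P) :=
      (AdjoinRoot.powerBasis hP.ne_zero).finite
    haveI : NumberField (AdjoinRoot P) := ⟨⟩
    NumberField.discr (AdjoinRoot P) = -31 ^ 41 := by
  have hP0 : P ≠ 0 := hP.ne_zero
  have : Fact (Irreducible P) := ⟨hP⟩
  have : CharZero (AdjoinRoot P) :=
    charZero_of_injective_algebraMap (algebraMap ℚ (AdjoinRoot P)).injective
  have : FiniteDimensional ℚ (AdjoinRoot P) := (AdjoinRoot.powerBasis hP0).finite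
  have : NumberField (AdjoinRoot P) := ⟨⟩
  exact discr_eq_of_minpoly_gen_eq_P (AdjoinRoot.powerBasis hP0)
    (AdjoinRoot.minpoly_powerBasis_gen_of_monic monic_P hP0)
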